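/- Let S be a stable matching in G*. Then S' is a popular max-matching in G. -/

import Mathlib

open Classical

noncomputable section

namespace PopMax

/-- A bipartite preference instance `G = (A ∪ B, E)`:
`E a b` says there is an edge between `a ∈ A` and `b ∈ B`;
`prefA a b b'` says `a` strictly prefers `b` to `b'`;
`prefB b a a'` says `b` strictly prefers `a` to `a'`. -/
structure PrefSys (A : Type*) (B : Type*) where
  E : A → B → Prop
  prefA : A → B → B → Prop
  prefB : B → A → A → Prop

/-- Every node has a strict (linear) preference order over its neighbors. -/
def PrefSys.IsValid {A B : Type*} (I : PrefSys A B) : Prop :=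
  (∀ a b, ¬ I.prefA a b b) ∧
  (∀ a b₁ b₂ b₃, I.prefA a b₁ b₂ → I.prefA a b₂ b₃ → I.prefA a b₁ b₃) ∧
  (∀ a b₁ b₂, I.E a b₁ → I.E a b₂ → b₁ ≠ b₂ → I.prefA a b₁ b₂ ∨ I.prefA a b₂ b₁) ∧
  (∀ b a, ¬ I.prefB b a a) ∧
  (∀ b a₁ a₂ a₃, I.prefB b a₁ a₂ → I.prefB b a₂ a₃ → I.prefB b a₁ a₃) ∧
  (∀ b a₁ a₂, I.E a₁ b → I.E a₂ b → a₁ ≠ a₂ → I.prefB b a₁ a₂ ∨ I.prefB b a₂ a₁)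

variable {A B : Type*}

/-- A matching: a set of pairwise disjoint edges. -/
def IsMatching (I : PrefSys A B) (M : Finset (A × B)) : Prop :=
  (∀ p ∈ M, I.E p.1 p.2) ∧
  (∀ p ∈ M, ∀ q ∈ M, p.1 = q.1 → p = q) ∧
  (∀ p ∈ M, ∀ q ∈ M, p.2 = q.2 → p = q)

def matchedA (M : Finset (A × B)) (a : A) : Prop := ∃ b, (a, b) ∈ M
def matchedB (M : Finset (A × B)) (b : B) : Prop := ∃ a, (a, b) ∈ M

/-- A maximum matching: a matching of maximum cardinality. -/
def IsMaximumMatching (I : PrefSys A B) (M : Finset (A × B)) : Prop :=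
  IsMatching I M ∧ ∀ N : Finset (A × B), IsMatching I N → N.card ≤ M.card

/-- A perfect matching matches all nodes. -/
def IsPerfectMatching (I : PrefSys A B) (M : Finset (A × B)) : Prop :=
  IsMatching I M ∧ (∀ a, matchedA M a) ∧ (∀ b, matchedB M b)

/-- `a ∈ A` prefers matching `M` to matching `N`. -/
def prefersA (I : PrefSys A B) (a : A) (M N : Finset (A × B)) : Prop :=
  ∃ b, (a, b) ∈ M ∧ (¬ matchedA N a ∨ ∃ b', (a, b') ∈ N ∧ I.prefA a b b')

/-- `b ∈ B` prefers matching `M` to matching `N`. -/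
def prefersB (I : PrefSys A B) (b : B) (M N : Finset (A × B)) : Prop :=
  ∃ a, (a, b) ∈ M ∧ (¬ matchedB N b ∨ ∃ a', (a', b) ∈ N ∧ I.prefB b a a')

/-- A node `u ∈ A ∪ B` prefers matching `M` to matching `N`. -/
def prefers (I : PrefSys A B) (u : A ⊕ B) (M N : Finset (A × B)) : Prop :=
  match u with
  | Sum.inl a => prefersA I a M N
  | Sum.inr b => prefersB I b M N

/-- `φ(M,N)`: the number of nodes preferring `M` to `N`. -/
def phi [Fintype A] [Fintype B] (I : PrefSys A B) (M N : Finset (A × B)) : ℕ :=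
  (Finset.univ.filter (fun u : A ⊕ B => prefers I u M N)).card

/-- `Δ(M,N) = φ(M,N) − φ(N,M)`. -/
def Delta [Fintype A] [Fintype B] (I : PrefSys A B) (M N : Finset (A × B)) : ℤ :=
  (phi I M N : ℤ) - (phi I N M : ℤ)

/-- A popular max-matching: a maximum matching `M` with `Δ(M,N) ≥ 0`
for every maximum matching `N`. -/
def IsPopularMaxMatching [Fintype A] [Fintype B] (I : PrefSys A B)
    (M : Finset (A × B)) : Prop :=
  IsMaximumMatching I M ∧
    ∀ N : Finset (A × B), IsMaximumMatching I N → 0 ≤ Delta I M N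

/-- The edge `(a,b) ∉ M` blocks `M`. -/
def Blocks (I : PrefSys A B) (M : Finset (A × B)) (a : A) (b : B) : Prop :=
  I.E a b ∧ (a, b) ∉ M ∧
  (¬ matchedA M a ∨ ∃ b', (a, b') ∈ M ∧ I.prefA a b b') ∧
  (¬ matchedB M b ∨ ∃ a', (a', b) ∈ M ∧ I.prefB b a a')

/-- A stable matching: a matching with no blocking edge. -/
def IsStable (I : PrefSys A B) (S : Finset (A × B)) : Prop :=
  IsMatching I S ∧ ∀ a b, ¬ Blocks I S a b

/-- The edge weight `wt_M(a,b) ∈ {0, ±2}`. -/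
def wt (I : PrefSys A B) (M : Finset (A × B)) (a : A) (b : B) : ℤ :=
  if Blocks I M a b then 2
  else if (∃ b', (a, b') ∈ M ∧ I.prefA a b' b) ∧ (∃ a', (a', b) ∈ M ∧ I.prefB b a' a) then -2
  else 0

/-- The underlying simple graph on the node set `A ⊕ B`. -/
def graphOf (I : PrefSys A B) : SimpleGraph (A ⊕ B) :=
  SimpleGraph.fromRel (fun u w =>
    match u, w with
    | Sum.inl a, Sum.inr b => I.E a b
    | _, _ => False)

/-- The (undirected) edge `e` is an edge of the matching `M`. -/
def edgeInM (M : Finset (A × B)) (e : Sym2 (A ⊕ B)) : Prop :=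
  ∃ a b, (a, b) ∈ M ∧ e = s(Sum.inl a, Sum.inr b)

/-- Consecutive edges alternate between `M` and `E ∖ M`. -/
def altRel (M : Finset (A × B)) (e f : Sym2 (A ⊕ B)) : Prop :=
  edgeInM M e ↔ ¬ edgeInM M f

/-- An alternating path with respect to `M`. -/
def IsAltPath (I : PrefSys A B) (M : Finset (A × B)) {u w : A ⊕ B}
    (p : (graphOf I).Walk u w) : Prop :=
  p.IsPath ∧ List.Chain' (altRel M) p.edges

/-- An alternating cycle with respect to `M` (alternation also across the wrap-around). -/
def IsAltCycle (I : PrefSys A B) (M : Finset (A × B)) {w : A ⊕ B}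
    (c : (graphOf I).Walk w w) : Prop :=
  c.IsCycle ∧ List.Chain' (altRel M) (c.edges ++ c.edges.take 1)

/-- `wt_M` as a function on undirected edges. -/
def wtSym (I : PrefSys A B) (M : Finset (A × B)) : Sym2 (A ⊕ B) → ℤ :=
  Sym2.lift ⟨fun u w =>
      match u, w with
      | Sum.inl a, Sum.inr b => wt I M a b
      | Sum.inr b, Sum.inl a => wt I M a b
      | _, _ => 0,
    by rintro (a | b) (a' | b') <;> rfl⟩

/-- `wt_M(ρ) = Σ_{e ∈ ρ} wt_M(e)` for a walk `ρ`. -/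
def wtWalk (I : PrefSys A B) (M : Finset (A × B)) {u w : A ⊕ B}
    (p : (graphOf I).Walk u w) : ℤ :=
  (p.edges.map (wtSym I M)).sum

/-- The node `u ∈ A ∪ B` is unmatched in `M`. -/
def unmatchedNode (M : Finset (A × B)) : A ⊕ B → Prop
  | Sum.inl a => ¬ matchedA M a
  | Sum.inr b => ¬ matchedB M b

/-- The set of edges `(a,b) ∈ A × B` used by the walk `p`. -/
def pairsOf [Fintype A] [Fintype B] (I : PrefSys A B) {u w : A ⊕ B}
    (p : (graphOf I).Walk u w) : Finset (A × B) :=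
  Finset.univ.filter (fun ab : A × B => s(Sum.inl ab.1, Sum.inr ab.2) ∈ p.edges)

/-- `M` is Pareto-optimal: no matching `N` has `φ(N,M) > 0` and `φ(M,N) = 0`. -/
def IsParetoOptimal [Fintype A] [Fintype B] (I : PrefSys A B) (M : Finset (A × B)) : Prop :=
  ¬ ∃ N : Finset (A × B), IsMatching I N ∧ 0 < phi I N M ∧ phi I M N = 0

/-! ### The auxiliary instance `G*` -/

/-- `A* = {a_0, …, a_{n0−1} : a ∈ A}` where `n0 = |A|`. -/
abbrev AStar (A : Type*) [Fintype A] : Type _ := A × Fin (Fintype.card A)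

/-- `B* = B̃ ∪ {d_1(a), …, d_{n0−1}(a) : a ∈ A}`; the dummy node `(a, j)`
(with `j : Fin (n0 − 1)`) stands for `d_{j+1}(a)`. -/
abbrev BStar (A : Type*) (B : Type*) [Fintype A] : Type _ :=
  B ⊕ (A × Fin (Fintype.card A - 1))

/-- The auxiliary instance `G*` with its edges and preferences. -/
def starSys [Fintype A] (I : PrefSys A B) : PrefSys (AStar A) (BStar A B) where
  E := fun ai w =>
    match ai, w with
    | (a, _i), Sum.inl b => I.E a b
    | (a, i), Sum.inr (a', j) => a = a' ∧ ((i : ℕ) = (j : ℕ) ∨ (i : ℕ) = (j : ℕ) + 1)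
  prefA := fun ai u v =>
    match ai, u, v with
    | (a, _i), Sum.inl b, Sum.inl b' => I.prefA a b b'
    | (a, i), Sum.inl _b, Sum.inr (a', j) => a = a' ∧ (j : ℕ) = (i : ℕ)
    | (a, i), Sum.inr (a', j), Sum.inl _b => a = a' ∧ (j : ℕ) + 1 = (i : ℕ)
    | (a, i), Sum.inr (a', j), Sum.inr (a'', j') =>
        a = a' ∧ a = a'' ∧ (j : ℕ) + 1 = (i : ℕ) ∧ (j' : ℕ) = (i : ℕ)
  prefB := fun w x y =>
    match w, x, y with
    | Sum.inl b, (a, i), (a', i') =>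
        (i' : ℕ) < (i : ℕ) ∨ ((i : ℕ) = (i' : ℕ) ∧ I.prefB b a a')
    | Sum.inr (a, j), (a', i), (a'', i') =>
        a' = a ∧ a'' = a ∧ (i : ℕ) = (j : ℕ) ∧ (i' : ℕ) = (j : ℕ) + 1

/-- The projection `S ↦ S'`: delete edges incident to dummy nodes and replace
`(a_i, b̃)` by `(a, b)`. -/
def proj [Fintype A] [Fintype B] (S : Finset (AStar A × BStar A B)) : Finset (A × B) :=
  Finset.univ.filter (fun ab : A × B =>
    ∃ i : Fin (Fintype.card A), ((ab.1, i), (Sum.inl ab.2 : BStar A B)) ∈ S)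

/-- `a ∈ A_i` for the level partition of `A` induced by a (stable) matching `S` in `G*`:
for `i ≤ n0 − 2`, `a ∈ A_i` iff `(a_i, b̃) ∈ S` for some `b̃ ∈ B̃`;
`A_{n0−1}` consists of all remaining nodes of `A`. -/
def AtLevelA [Fintype A] (S : Finset (AStar A × BStar A B)) (a : A) (i : ℕ) : Prop :=
  (i + 1 < Fintype.card A ∧
     ∃ j : Fin (Fintype.card A), (j : ℕ) = i ∧
       ∃ b : B, ((a, j), (Sum.inl b : BStar A B)) ∈ S) ∨
  (i + 1 = Fintype.card A ∧
     ∀ j : Fin (Fintype.card A), (j : ℕ) + 1 < Fintype.card A →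
       ∀ b : B, ((a, j), (Sum.inl b : BStar A B)) ∉ S)

/-- `b ∈ B_i` for the level partition of `B` induced by a (stable) matching `S` in `G*`:
for `1 ≤ i ≤ n0 − 1`, `b ∈ B_i` iff `(a_i, b̃) ∈ S` for some `a ∈ A_i`;
`B_0` consists of all remaining nodes of `B`. -/
def AtLevelB [Fintype A] (S : Finset (AStar A × BStar A B)) (b : B) (i : ℕ) : Prop :=
  (1 ≤ i ∧ i < Fintype.card A ∧
     ∃ j : Fin (Fintype.card A), (j : ℕ) = i ∧
       ∃ a : A, AtLevelA S a i ∧ ((a, j), (Sum.inl b : BStar A B)) ∈ S) ∨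
  (i = 0 ∧ ∀ j : Fin (Fintype.card A), 1 ≤ (j : ℕ) →
       ∀ a : A, AtLevelA S a (j : ℕ) → ((a, j), (Sum.inl b : BStar A B)) ∉ S)

/-!
Read the copy of `a` left over by the dummy nodes as a level `l a`, and the copy matched to `b̃` as
a level `q b` (with `q b = 0` if there is none). Stability of `S` makes `(l, q)` a dual certificate
for `M = S'`: every edge satisfies `wt_M(a, b) ≤ 2 (q b - l a)`, with `l = q` along `M`, while
unmatched nodes of `A` sit at the top level and unmatched nodes of `B` at level `0`.

If `|M| < n0` then some level `k` carries no edge of `M`. As `wt_M ≥ -2`, no edge of `G` drops by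
more than one level, so the matched `a` with `l a < k` and the matched `b` with `q b ≥ k` form a
vertex cover of size `|M|`, and `M` is maximum by Kőnig's argument. For a maximum matching `N`,
summing the edge inequality over `N` bounds `Δ(N, M)` by `2 ∑_N (q - l) ≤ 2 ∑_M (q - l) = 0`.
-/

section Vote

variable {α : Type*} {r : α → α → Prop} {P : Set α} {x : α}

/-- A node with preference relation `r` and set of current partners `P` (at most one of them, for a
node of a matching) would rather be matched to `x`. Both halves of `Blocks` and the comparisons in
`prefersA`, `prefersB` are instances of this. -/
def Wants (r : α → α → Prop) (P : Set α) (x : α) : Prop :=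
  ¬ P.Nonempty ∨ ∃ y ∈ P, r x y

/-- The vote in `{1, 0, -1}` of a node with preference relation `r` on replacing its set of
partners `P` by `Q`. -/
def vote (r : α → α → Prop) (P Q : Set α) : ℤ :=
  (if ∃ x ∈ Q, Wants r P x then 1 else 0) - (if ∃ x ∈ P, Wants r Q x then 1 else 0)

lemma not_wants_iff [Std.Asymm r] (hP : P.Subsingleton) (hx : ∀ y ∈ P, r x y ∨ r y x) :
    ¬ Wants r P x ↔ ∃ y ∈ P, r y x := by
  constructor
  · intro h
    obtain ⟨hne, hworse⟩ := not_or.1 h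
    obtain ⟨y, hy⟩ := not_not.1 hne
    exact ⟨y, hy, (hx y hy).resolve_left fun hxy => hworse ⟨y, hy, hxy⟩⟩
  · rintro ⟨y, hy, hyx⟩ (hempty | ⟨z, hz, hxz⟩)
    · exact hempty ⟨y, hy⟩
    · exact asymm_of r hyx (hP hy hz ▸ hxz)

lemma vote_self : vote r P P = 0 :=
  sub_self _

lemma vote_empty_nonpos : vote r P ∅ ≤ 0 := by
  unfold vote
  split_ifs <;> simp_all

lemma vote_singleton [Std.Asymm r] (hP : P.Subsingleton) (hx : ∀ y ∈ P, r x y ∨ r y x) :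
    vote r P {x} = if Wants r P x then 1 else -1 := by
  have hkeep : (∃ y ∈ P, Wants r {x} y) ↔ ¬ Wants r P x := by
    rw [not_wants_iff hP hx]
    simp [Wants]
  simp only [vote, hkeep, Set.mem_singleton_iff, exists_eq_left]
  split_ifs <;> simp

end Vote

section Matching

variable {I : PrefSys A B} {M N : Finset (A × B)} {a : A} {b : B}

/-- The partners of `a ∈ A` in `M`. -/
def partnersA (M : Finset (A × B)) (a : A) : Set B := {b | (a, b) ∈ M}

/-- The partners of `b ∈ B` in `M`. -/
def partnersB (M : Finset (A × B)) (b : B) : Set A := {a | (a, b) ∈ M}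

lemma IsMatching.right_unique {b' : B} (hM : IsMatching I M) (h : (a, b) ∈ M)
    (h' : (a, b') ∈ M) : b = b' :=
  congrArg Prod.snd (hM.2.1 _ h _ h' rfl)

lemma IsMatching.left_unique {a' : A} (hM : IsMatching I M) (h : (a, b) ∈ M)
    (h' : (a', b) ∈ M) : a = a' :=
  congrArg Prod.fst (hM.2.2 _ h _ h' rfl)

lemma IsMatching.injOn_fst (hM : IsMatching I M) : Set.InjOn Prod.fst (M : Set (A × B)) :=
  fun e he f hf => hM.2.1 e he f hf

lemma IsMatching.injOn_snd (hM : IsMatching I M) : Set.InjOn Prod.snd (M : Set (A × B)) :=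
  fun e he f hf => hM.2.2 e he f hf

lemma IsMatching.subsingleton_partnersA (hM : IsMatching I M) : (partnersA M a).Subsingleton :=
  fun _ h _ h' => hM.right_unique h h'

lemma IsMatching.subsingleton_partnersB (hM : IsMatching I M) : (partnersB M b).Subsingleton :=
  fun _ h _ h' => hM.left_unique h h'

lemma IsMatching.partnersA_eq_singleton (hM : IsMatching I M) (h : (a, b) ∈ M) :
    partnersA M a = {b} :=
  hM.subsingleton_partnersA.eq_singleton_of_mem h

lemma IsMatching.partnersB_eq_singleton (hM : IsMatching I M) (h : (a, b) ∈ M) :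
    partnersB M b = {a} :=
  hM.subsingleton_partnersB.eq_singleton_of_mem h

lemma IsMatching.card_le [Fintype A] (hM : IsMatching I M) : M.card ≤ Fintype.card A :=
  Finset.card_le_card_of_injOn Prod.fst (fun _ _ => Finset.mem_univ _) hM.injOn_fst

lemma IsStable.not_wants (hM : IsStable I M) (hE : I.E a b) (hab : (a, b) ∉ M)
    (ha : Wants (I.prefA a) (partnersA M a) b) : ¬ Wants (I.prefB b) (partnersB M b) a :=
  fun hb => hM.2 a b ⟨hE, hab, ha, hb⟩

/-- The easy half of Kőnig's theorem: `p` selects one endpoint of each edge of `M` (the left one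
where it holds), and the selected endpoints form a vertex cover of `N`. -/
lemma IsMatching.card_le_of_cover (hN : IsMatching I N) (p : A × B → Prop)
    (hcover : ∀ e ∈ N, ∃ m ∈ M, (p m ∧ m.1 = e.1) ∨ (¬ p m ∧ m.2 = e.2)) :
    N.card ≤ M.card := by
  choose! m hmem hm using hcover
  refine Finset.card_le_card_of_injOn m hmem fun e he f hf hef => ?_
  have hme := hm e he
  rw [hef] at hme
  rcases hme with ⟨hp, he1⟩ | ⟨hp, he2⟩ <;> rcases hm f hf with ⟨hp', hf1⟩ | ⟨hp', hf2⟩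
  · exact hN.injOn_fst he hf (he1.symm.trans hf1)
  · exact absurd hp hp'
  · exact absurd hp' hp
  · exact hN.injOn_snd he hf (he2.symm.trans hf2)

end Matching

section Weight

variable {I : PrefSys A B} {M N : Finset (A × B)} {a : A} {b : B}

lemma PrefSys.IsValid.asymm_prefA (hI : I.IsValid) (a : A) : Std.Asymm (I.prefA a) :=
  ⟨fun b b' h h' => hI.1 a b (hI.2.1 a b b' b h h')⟩

lemma PrefSys.IsValid.asymm_prefB (hI : I.IsValid) (b : B) : Std.Asymm (I.prefB b) :=
  ⟨fun a a' h h' => hI.2.2.2.1 b a (hI.2.2.2.2.1 b a a' a h h')⟩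

lemma IsMatching.prefA_total (hI : I.IsValid) (hM : IsMatching I M) (hE : I.E a b)
    (hab : (a, b) ∉ M) : ∀ y ∈ partnersA M a, I.prefA a b y ∨ I.prefA a y b :=
  fun y hy => hI.2.2.1 a b y hE (hM.1 _ hy) fun hby => hab (hby ▸ hy)

lemma IsMatching.prefB_total (hI : I.IsValid) (hM : IsMatching I M) (hE : I.E a b)
    (hab : (a, b) ∉ M) : ∀ x ∈ partnersB M b, I.prefB b a x ∨ I.prefB b x a :=
  fun x hx => hI.2.2.2.2.2 b a x hE (hM.1 _ hx) fun hax => hab (hax ▸ hx)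

lemma wt_of_mem (hI : I.IsValid) (hM : IsMatching I M) (hab : (a, b) ∈ M) : wt I M a b = 0 := by
  have hblocks : ¬ Blocks I M a b := fun h => h.2.1 hab
  have hworse : ¬ ∃ b', (a, b') ∈ M ∧ I.prefA a b' b := by
    rintro ⟨b', hb', hpref⟩
    exact hI.1 a b (hM.right_unique hb' hab ▸ hpref)
  rw [wt, if_neg hblocks, if_neg fun h => hworse h.1]

lemma wt_of_notMem (hI : I.IsValid) (hM : IsMatching I M) (hE : I.E a b) (hab : (a, b) ∉ M) :
    wt I M a b = (if Wants (I.prefA a) (partnersA M a) b then 1 else -1) +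
      (if Wants (I.prefB b) (partnersB M b) a then 1 else -1) := by
  have := hI.asymm_prefA a
  have := hI.asymm_prefB b
  have hblocks : Blocks I M a b ↔
      Wants (I.prefA a) (partnersA M a) b ∧ Wants (I.prefB b) (partnersB M b) a :=
    ⟨fun h => h.2.2, fun h => ⟨hE, hab, h⟩⟩
  have hworseA : (∃ b', (a, b') ∈ M ∧ I.prefA a b' b) ↔
      ¬ Wants (I.prefA a) (partnersA M a) b :=
    (not_wants_iff hM.subsingleton_partnersA (hM.prefA_total hI hE hab)).symm
  have hworseB : (∃ a', (a', b) ∈ M ∧ I.prefB b a' a) ↔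
      ¬ Wants (I.prefB b) (partnersB M b) a :=
    (not_wants_iff hM.subsingleton_partnersB (hM.prefB_total hI hE hab)).symm
  rw [wt, hblocks, hworseA, hworseB]
  split_ifs <;> simp_all

lemma vote_add_vote_eq_wt (hI : I.IsValid) (hM : IsMatching I M) (hN : IsMatching I N)
    (hab : (a, b) ∈ N) :
    vote (I.prefA a) (partnersA M a) (partnersA N a) +
      vote (I.prefB b) (partnersB M b) (partnersB N b) = wt I M a b := by
  have := hI.asymm_prefA a
  have := hI.asymm_prefB b
  have hE : I.E a b := hN.1 _ hab
  rw [hN.partnersA_eq_singleton hab, hN.partnersB_eq_singleton hab]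
  by_cases hmem : (a, b) ∈ M
  · rw [hM.partnersA_eq_singleton hmem, hM.partnersB_eq_singleton hmem, vote_self, vote_self,
      wt_of_mem hI hM hmem, add_zero]
  · rw [vote_singleton hM.subsingleton_partnersA (hM.prefA_total hI hE hmem),
      vote_singleton hM.subsingleton_partnersB (hM.prefB_total hI hE hmem),
      wt_of_notMem hI hM hE hmem]

lemma neg_two_le_wt : -2 ≤ wt I M a b := by
  unfold wt
  split_ifs <;> norm_num

lemma wt_nonneg_of_not_matchedA (ha : ¬ matchedA M a) : 0 ≤ wt I M a b := by
  have hworse : ¬ ∃ b', (a, b') ∈ M ∧ I.prefA a b' b := fun ⟨b', hb', _⟩ => ha ⟨b', hb'⟩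
  have hneg : ¬ ((∃ b', (a, b') ∈ M ∧ I.prefA a b' b) ∧ ∃ a', (a', b) ∈ M ∧ I.prefB b a' a) :=
    fun h => hworse h.1
  rw [wt, if_neg hneg]
  split_ifs <;> norm_num

lemma wt_nonneg_of_not_matchedB (hb : ¬ matchedB M b) : 0 ≤ wt I M a b := by
  have hworse : ¬ ∃ a', (a', b) ∈ M ∧ I.prefB b a' a := fun ⟨a', ha', _⟩ => hb ⟨a', ha'⟩
  have hneg : ¬ ((∃ b', (a, b') ∈ M ∧ I.prefA a b' b) ∧ ∃ a', (a', b) ∈ M ∧ I.prefB b a' a) :=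
    fun h => hworse h.2
  rw [wt, if_neg hneg]
  split_ifs <;> norm_num

lemma wt_of_not_matched (hE : I.E a b) (ha : ¬ matchedA M a) (hb : ¬ matchedB M b) :
    wt I M a b = 2 :=
  if_pos ⟨hE, fun hab => ha ⟨b, hab⟩, Or.inl ha, Or.inl hb⟩

end Weight

section Sum

variable {ι κ α R : Type*} [AddCommGroup R] [PartialOrder R] [IsOrderedAddMonoid R]
  {s : Finset ι} {t : Finset κ} {u : ι → α} {v : κ → α} {f : α → R}

lemma sum_comp_le_sum_comp (hu : Set.InjOn u s) (hv : Set.InjOn v t)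
    (hnonpos : ∀ i ∈ s, (∀ k ∈ t, v k ≠ u i) → f (u i) ≤ 0)
    (hnonneg : ∀ k ∈ t, (∀ i ∈ s, u i ≠ v k) → 0 ≤ f (v k)) :
    ∑ i ∈ s, f (u i) ≤ ∑ k ∈ t, f (v k) := by
  rw [← Finset.sum_image hu, ← Finset.sum_image hv, ← sub_nonneg,
    ← Finset.sum_sdiff_sub_sum_sdiff, sub_nonneg]
  refine (Finset.sum_nonpos fun x hx => ?_).trans (Finset.sum_nonneg fun x hx => ?_)
  · obtain ⟨hxs, hxt⟩ := Finset.mem_sdiff.1 hx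
    obtain ⟨i, hi, rfl⟩ := Finset.mem_image.1 hxs
    exact hnonpos i hi fun k hk hki => hxt (Finset.mem_image.2 ⟨k, hk, hki⟩)
  · obtain ⟨hxt, hxs⟩ := Finset.mem_sdiff.1 hx
    obtain ⟨k, hk, rfl⟩ := Finset.mem_image.1 hxt
    exact hnonneg k hk fun i hi hik => hxs (Finset.mem_image.2 ⟨i, hi, hik⟩)

end Sum

section Popularity

variable [Fintype A] [Fintype B] {I : PrefSys A B} {M N : Finset (A × B)}

lemma phi_eq_sum (I : PrefSys A B) (M N : Finset (A × B)) :
    (phi I M N : ℤ) = (∑ a, if prefersA I a M N then 1 else 0) +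
      ∑ b, if prefersB I b M N then 1 else 0 := by
  rw [phi, Finset.card_filter, Nat.cast_sum, Fintype.sum_sum_type]
  push_cast
  rfl

lemma Delta_eq_sum_vote (I : PrefSys A B) (M N : Finset (A × B)) :
    Delta I N M = ∑ a, vote (I.prefA a) (partnersA M a) (partnersA N a) +
      ∑ b, vote (I.prefB b) (partnersB M b) (partnersB N b) := by
  have hA (a : A) : vote (I.prefA a) (partnersA M a) (partnersA N a) =
      (if prefersA I a N M then 1 else 0) - (if prefersA I a M N then 1 else 0) := rfl
  have hB (b : B) : vote (I.prefB b) (partnersB M b) (partnersB N b) =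
      (if prefersB I b N M then 1 else 0) - (if prefersB I b M N then 1 else 0) := rfl
  simp only [Delta, phi_eq_sum, hA, hB, Finset.sum_sub_distrib]
  ring

lemma Delta_le_sum_wt (hI : I.IsValid) (hM : IsMatching I M) (hN : IsMatching I N) :
    Delta I N M ≤ ∑ e ∈ N, wt I M e.1 e.2 := by
  have hA : ∑ a, vote (I.prefA a) (partnersA M a) (partnersA N a) ≤
      ∑ e ∈ N, vote (I.prefA e.1) (partnersA M e.1) (partnersA N e.1) := by
    refine sum_comp_le_sum_comp (u := id)
      (f := fun a => vote (I.prefA a) (partnersA M a) (partnersA N a))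
      (Set.injOn_id _) hN.injOn_fst (fun a _ ha => ?_)
      fun e _ he => absurd rfl (he e.1 (Finset.mem_univ _))
    have hempty : partnersA N a = ∅ := Set.eq_empty_of_forall_notMem fun b hb => ha _ hb rfl
    rw [id, hempty]
    exact vote_empty_nonpos
  have hB : ∑ b, vote (I.prefB b) (partnersB M b) (partnersB N b) ≤
      ∑ e ∈ N, vote (I.prefB e.2) (partnersB M e.2) (partnersB N e.2) := by
    refine sum_comp_le_sum_comp (u := id)
      (f := fun b => vote (I.prefB b) (partnersB M b) (partnersB N b))
      (Set.injOn_id _) hN.injOn_snd (fun b _ hb => ?_)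
      fun e _ he => absurd rfl (he e.2 (Finset.mem_univ _))
    have hempty : partnersB N b = ∅ := Set.eq_empty_of_forall_notMem fun a ha => hb _ ha rfl
    rw [id, hempty]
    exact vote_empty_nonpos
  calc Delta I N M
      ≤ ∑ e ∈ N, (vote (I.prefA e.1) (partnersA M e.1) (partnersA N e.1) +
          vote (I.prefB e.2) (partnersB M e.2) (partnersB N e.2)) := by
        rw [Delta_eq_sum_vote, Finset.sum_add_distrib]
        exact add_le_add hA hB
    _ = ∑ e ∈ N, wt I M e.1 e.2 :=
        Finset.sum_congr rfl fun e he => vote_add_vote_eq_wt hI hM hN he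

lemma Delta_swap (I : PrefSys A B) (M N : Finset (A × B)) : Delta I M N = -Delta I N M :=
  (neg_sub _ _).symm

end Popularity

section Certificate

/-- Levels `l` on `A` and `q` on `B`, with top level `h`, certifying that `M` is a popular
max-matching: up to the factor `2`, `q` and `-l` form a solution of the dual linear program. -/
structure IsLevelCertificate (I : PrefSys A B) (M : Finset (A × B)) (h : ℕ) (l : A → ℕ)
    (q : B → ℕ) : Prop where
  eq_of_mem : ∀ a b, (a, b) ∈ M → l a = q b
  le_top : ∀ a, l a ≤ h
  eq_top : ∀ a, ¬ matchedA M a → l a = h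
  eq_zero : ∀ b, ¬ matchedB M b → q b = 0
  wt_le : ∀ a b, I.E a b → wt I M a b ≤ 2 * ((q b : ℤ) - l a)

variable {I : PrefSys A B} {M N : Finset (A × B)} {h k : ℕ} {l : A → ℕ} {q : B → ℕ}

lemma IsLevelCertificate.exists_cover (hc : IsLevelCertificate I M h l q) (hk : k ≤ h)
    (hgap : ∀ e ∈ M, l e.1 ≠ k) {a : A} {b : B} (hE : I.E a b) :
    ∃ m ∈ M, (l m.1 < k ∧ m.1 = a) ∨ (¬ l m.1 < k ∧ m.2 = b) := by
  have hwt := hc.wt_le a b hE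
  by_cases ha : matchedA M a
  · obtain ⟨b', hab'⟩ := ha
    have hla : l a ≠ k := hgap _ hab'
    rcases lt_or_ge (l a) k with hlt | hge
    · exact ⟨(a, b'), hab', Or.inl ⟨hlt, rfl⟩⟩
    by_cases hb : matchedB M b
    · obtain ⟨a', ha'b⟩ := hb
      have hle := neg_two_le_wt (I := I) (M := M) (a := a) (b := b)
      have heq := hc.eq_of_mem a' b ha'b
      exact ⟨(a', b), ha'b, Or.inr ⟨by dsimp only; omega, rfl⟩⟩
    · have hnonneg := wt_nonneg_of_not_matchedB (I := I) (a := a) hb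
      have hzero := hc.eq_zero b hb
      omega
  · have htop := hc.eq_top a ha
    by_cases hb : matchedB M b
    · obtain ⟨a', ha'b⟩ := hb
      have hnonneg := wt_nonneg_of_not_matchedA (I := I) (b := b) ha
      have heq := hc.eq_of_mem a' b ha'b
      exact ⟨(a', b), ha'b, Or.inr ⟨by dsimp only; omega, rfl⟩⟩
    · have htwo := wt_of_not_matched hE ha hb
      have hzero := hc.eq_zero b hb
      omega

lemma IsLevelCertificate.card_le (hc : IsLevelCertificate I M h l q) (hcard : M.card ≤ h)
    (hN : IsMatching I N) : N.card ≤ M.card := by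
  obtain ⟨k, hk, hgap⟩ : ∃ k ∈ Finset.range (h + 1), k ∉ M.image fun e => l e.1 := by
    refine Finset.exists_mem_notMem_of_card_lt_card ?_
    rw [Finset.card_range]
    exact Finset.card_image_le.trans_lt (Nat.lt_succ_of_le hcard)
  refine hN.card_le_of_cover (fun m => l m.1 < k) fun e he => ?_
  exact hc.exists_cover (Finset.mem_range_succ_iff.1 hk)
    (fun m hm hmk => hgap (Finset.mem_image.2 ⟨m, hm, hmk⟩)) (hN.1 e he)

lemma IsLevelCertificate.sum_level_right_le (hc : IsLevelCertificate I M h l q)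
    (hM : IsMatching I M) (hN : IsMatching I N) :
    ∑ e ∈ N, (q e.2 : ℤ) ≤ ∑ e ∈ M, (q e.2 : ℤ) := by
  refine sum_comp_le_sum_comp (f := fun b => (q b : ℤ)) hN.injOn_snd hM.injOn_snd
    (fun e _ he => ?_) fun e _ _ => Nat.cast_nonneg _
  have hzero := hc.eq_zero e.2 fun ⟨a, hab⟩ => he _ hab rfl
  simp [hzero]

lemma IsLevelCertificate.sum_colevel_left_le (hc : IsLevelCertificate I M h l q)
    (hM : IsMatching I M) (hN : IsMatching I N) :
    ∑ e ∈ N, ((h : ℤ) - l e.1) ≤ ∑ e ∈ M, ((h : ℤ) - l e.1) := by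
  refine sum_comp_le_sum_comp (f := fun a => (h : ℤ) - l a) hN.injOn_fst hM.injOn_fst
    (fun e _ he => ?_) fun e _ _ => sub_nonneg.2 (Nat.cast_le.2 (hc.le_top e.1))
  have htop := hc.eq_top e.1 fun ⟨b, hab⟩ => he _ hab rfl
  simp [htop]

lemma IsLevelCertificate.sum_level_sub_le_zero (hc : IsLevelCertificate I M h l q)
    (hM : IsMatching I M) (hN : IsMatching I N) (hcard : M.card ≤ N.card) :
    ∑ e ∈ N, ((q e.2 : ℤ) - l e.1) ≤ 0 := by
  have hq := hc.sum_level_right_le hM hN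
  have hl := hc.sum_colevel_left_le hM hN
  have heq : ∑ e ∈ M, (l e.1 : ℤ) = ∑ e ∈ M, (q e.2 : ℤ) :=
    Finset.sum_congr rfl fun e he => by rw [hc.eq_of_mem e.1 e.2 he]
  have htop : (M.card : ℤ) * h ≤ N.card * h := by gcongr
  simp only [Finset.sum_sub_distrib, Finset.sum_const, nsmul_eq_mul] at hl ⊢
  linarith

lemma IsLevelCertificate.Delta_nonneg [Fintype A] [Fintype B] (hI : I.IsValid)
    (hc : IsLevelCertificate I M h l q) (hM : IsMatching I M) (hN : IsMatching I N)
    (hcard : M.card ≤ N.card) : 0 ≤ Delta I M N := by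
  rw [Delta_swap, neg_nonneg]
  calc Delta I N M
      ≤ ∑ e ∈ N, wt I M e.1 e.2 := Delta_le_sum_wt hI hM hN
    _ ≤ ∑ e ∈ N, 2 * ((q e.2 : ℤ) - l e.1) :=
        Finset.sum_le_sum fun e he => hc.wt_le e.1 e.2 (hN.1 e he)
    _ = 2 * ∑ e ∈ N, ((q e.2 : ℤ) - l e.1) := (Finset.mul_sum _ _ _).symm
    _ ≤ 0 := by linarith [hc.sum_level_sub_le_zero hM hN hcard]

end Certificate

section FreeCopy

variable [Fintype A] {I : PrefSys A B} {S : Finset (AStar A × BStar A B)} {a : A}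
  {i j : Fin (Fintype.card A)}

/-- The copy `a_i` is not matched to a dummy node. -/
def IsFreeCopy (S : Finset (AStar A × BStar A B)) (a : A) (i : Fin (Fintype.card A)) : Prop :=
  ∀ d, ((a, i), (Sum.inr d : BStar A B)) ∉ S

/-- The copy `a_j` is matched to `d_{j+1}(a)`, which is encoded as the dummy with index `j`. -/
def IsMatchedToNextDummy (S : Finset (AStar A × BStar A B)) (a : A)
    (j : Fin (Fintype.card A)) : Prop :=
  ∃ k : Fin (Fintype.card A - 1), (k : ℕ) = j ∧ ((a, j), (Sum.inr (a, k) : BStar A B)) ∈ S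

lemma eq_of_mem_dummy {a' : A} {k : Fin (Fintype.card A - 1)} (hS : IsMatching (starSys I) S)
    (h : ((a, i), (Sum.inr (a', k) : BStar A B)) ∈ S) :
    a = a' ∧ ((i : ℕ) = k ∨ (i : ℕ) = k + 1) :=
  hS.1 _ h

lemma isFreeCopy_of_mem {b : B} (hS : IsMatching (starSys I) S)
    (h : ((a, i), (Sum.inl b : BStar A B)) ∈ S) : IsFreeCopy S a i :=
  fun _ hd => Sum.inl_ne_inr (hS.right_unique h hd)

/-- The `n0` copies of `a` compete for only `n0 - 1` dummies. -/
lemma exists_isFreeCopy (hS : IsMatching (starSys I) S) (a : A) : ∃ i, IsFreeCopy S a i := by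
  by_contra! hcon
  simp only [IsFreeCopy, not_forall, not_not] at hcon
  choose d hd using hcon
  have hinj : Function.Injective fun i => (d i).2 := fun i j hij => by
    have hfst : (d i).1 = (d j).1 :=
      (eq_of_mem_dummy hS (hd i)).1.symm.trans (eq_of_mem_dummy hS (hd j)).1
    have hmem := hd i
    rw [Prod.ext hfst hij] at hmem
    exact congrArg Prod.snd (hS.left_unique hmem (hd j))
  have hcard := Fintype.card_le_of_injective _ hinj
  have hpos : 0 < Fintype.card A := Fintype.card_pos_iff.2 ⟨a⟩
  simp only [Fintype.card_fin] at hcard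
  omega

/-- `d_i(a)` is the first choice of `a_i`, so it must be matched to the only node it prefers. -/
lemma isMatchedToNextDummy_of_succ (hS : IsStable (starSys I) S) (hij : (j : ℕ) + 1 = i)
    (hi : ∀ k : Fin (Fintype.card A - 1), (k : ℕ) + 1 = i →
      ((a, i), (Sum.inr (a, k) : BStar A B)) ∉ S) :
    IsMatchedToNextDummy S a j := by
  let k : Fin (Fintype.card A - 1) := ⟨j, by omega⟩
  have hfirst : Wants ((starSys I).prefA (a, i)) (partnersA S (a, i)) (Sum.inr (a, k)) := by
    refine or_iff_not_imp_left.2 fun hne => ?_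
    obtain ⟨w, hw⟩ := not_not.1 hne
    refine ⟨w, hw, ?_⟩
    rcases w with b | ⟨a', k'⟩
    · exact ⟨rfl, hij⟩
    · obtain ⟨rfl, hk' | hk'⟩ := eq_of_mem_dummy hS.1 hw
      · exact ⟨rfl, rfl, hij, hk'.symm⟩
      · exact absurd hw (hi k' hk'.symm)
  have hnot := hS.not_wants (show (starSys I).E (a, i) (Sum.inr (a, k)) from ⟨rfl, Or.inr hij.symm⟩)
    (hi k hij) hfirst
  obtain ⟨⟨a', i'⟩, hmem⟩ := not_not.1 (not_or.1 hnot).1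
  obtain ⟨rfl, hi' | hi'⟩ := eq_of_mem_dummy hS.1 hmem
  · obtain rfl : i' = j := Fin.ext hi'
    exact ⟨k, rfl, hmem⟩
  · obtain rfl : i' = i := Fin.ext (hi'.trans hij)
    exact absurd hmem (hi k hij)

lemma isMatchedToNextDummy_of_lt (hS : IsStable (starSys I) S) (hji : j < i)
    (hi : ∀ k : Fin (Fintype.card A - 1), (k : ℕ) + 1 = i →
      ((a, i), (Sum.inr (a, k) : BStar A B)) ∉ S) :
    IsMatchedToNextDummy S a j := by
  obtain ⟨m, hm⟩ : ∃ m, (j : ℕ) + m + 1 = i := ⟨i - j - 1, by omega⟩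
  induction m generalizing i with
  | zero => exact isMatchedToNextDummy_of_succ hS hm hi
  | succ m ih =>
    let i' : Fin (Fintype.card A) := ⟨j + m + 1, by omega⟩
    obtain ⟨k, hk, hmem⟩ := isMatchedToNextDummy_of_succ hS (j := i') hm hi
    refine ih (i := i') (Fin.lt_def.2 (by dsimp only [i']; omega)) (fun k' hk' hmem' => ?_) rfl
    have hkk' := hS.1.right_unique hmem hmem'
    simp only [Sum.inr.injEq, Prod.mk.injEq, true_and] at hkk'
    omega

lemma IsFreeCopy.isMatchedToNextDummy (hS : IsStable (starSys I) S) (hi : IsFreeCopy S a i)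
    (hji : j < i) : IsMatchedToNextDummy S a j :=
  isMatchedToNextDummy_of_lt hS hji fun _ _ => hi _

lemma IsFreeCopy.unique (hS : IsStable (starSys I) S) (hi : IsFreeCopy S a i)
    (hj : IsFreeCopy S a j) : i = j := by
  rcases lt_trichotomy i j with hlt | heq | hlt
  · obtain ⟨k, -, hmem⟩ := hj.isMatchedToNextDummy hS hlt
    exact absurd hmem (hi _)
  · exact heq
  · obtain ⟨k, -, hmem⟩ := hi.isMatchedToNextDummy hS hlt
    exact absurd hmem (hj _)

/-- An unmatched `a_i` with `i < n0 - 1` would block with `d_{i+1}(a)`, whose first choice it is. -/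
lemma IsFreeCopy.eq_last (hS : IsStable (starSys I) S) (hi : IsFreeCopy S a i)
    (hun : ¬ matchedA S (a, i)) : (i : ℕ) = Fintype.card A - 1 := by
  by_contra hlast
  let k : Fin (Fintype.card A - 1) := ⟨i, by omega⟩
  refine hS.not_wants (show (starSys I).E (a, i) (Sum.inr (a, k)) from ⟨rfl, Or.inl rfl⟩)
    (hi _) (Or.inl hun) (or_iff_not_imp_left.2 fun hne => ?_)
  obtain ⟨⟨a', i'⟩, hmem⟩ := not_not.1 hne
  obtain ⟨rfl, hi' | hi'⟩ := eq_of_mem_dummy hS.1 hmem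
  · obtain rfl : i' = i := Fin.ext hi'
    exact absurd hmem (hi _)
  · exact ⟨_, hmem, rfl, rfl, rfl, hi'⟩

end FreeCopy

section Level

variable [Fintype A] {I : PrefSys A B} {S : Finset (AStar A × BStar A B)} {a : A} {b : B}
  {i : Fin (Fintype.card A)}

/-- The index of the free copy of `a`; it is unique when `S` is stable. -/
def levelA (S : Finset (AStar A × BStar A B)) (a : A) : ℕ :=
  sInf {m | ∃ i, IsFreeCopy S a i ∧ (i : ℕ) = m}

/-- The subscript `i` of the partner `a_i` of `b̃` in `S`, or `sSup ∅ = 0` if there is none. -/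
def levelB (S : Finset (AStar A × BStar A B)) (b : B) : ℕ :=
  sSup {m | ∃ a i, ((a, i), (Sum.inl b : BStar A B)) ∈ S ∧ (i : ℕ) = m}

lemma exists_isFreeCopy_levelA (hS : IsMatching (starSys I) S) (a : A) :
    ∃ i, IsFreeCopy S a i ∧ (i : ℕ) = levelA S a := by
  obtain ⟨i, hi⟩ := exists_isFreeCopy hS a
  exact Nat.sInf_mem (s := {m | ∃ i, IsFreeCopy S a i ∧ (i : ℕ) = m}) ⟨i, i, hi, rfl⟩

lemma levelB_eq (hS : IsMatching (starSys I) S) (h : ((a, i), (Sum.inl b : BStar A B)) ∈ S) :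
    levelB S b = i := by
  have hset : {m | ∃ a i, ((a, i), (Sum.inl b : BStar A B)) ∈ S ∧ (i : ℕ) = m} = {(i : ℕ)} := by
    refine Set.eq_singleton_iff_unique_mem.2 ⟨⟨a, i, h, rfl⟩, ?_⟩
    rintro _ ⟨a', i', h', rfl⟩
    exact congrArg (fun x : AStar A => (x.2 : ℕ)) (hS.left_unique h' h)
  rw [levelB, hset, csSup_singleton]

variable [Fintype B]

lemma mem_proj : (a, b) ∈ proj S ↔ ∃ i, ((a, i), (Sum.inl b : BStar A B)) ∈ S := by
  simp [proj]

lemma IsFreeCopy.mem_of_mem_proj (hS : IsStable (starSys I) S) (hi : IsFreeCopy S a i)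
    (hab : (a, b) ∈ proj S) : ((a, i), (Sum.inl b : BStar A B)) ∈ S := by
  obtain ⟨i', hmem⟩ := mem_proj.1 hab
  rwa [hi.unique hS (isFreeCopy_of_mem hS.1 hmem)]

lemma levelB_eq_zero (hb : ¬ matchedB (proj S) b) : levelB S b = 0 := by
  have hset : {m | ∃ a i, ((a, i), (Sum.inl b : BStar A B)) ∈ S ∧ (i : ℕ) = m} = ∅ := by
    refine Set.eq_empty_of_forall_notMem ?_
    rintro _ ⟨a, i, hmem, -⟩
    exact hb ⟨a, mem_proj.2 ⟨i, hmem⟩⟩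
  rw [levelB, hset, csSup_empty, Nat.bot_eq_zero]

lemma isMatching_proj (hS : IsStable (starSys I) S) : IsMatching I (proj S) := by
  refine ⟨?_, ?_, ?_⟩
  · rintro ⟨a, b⟩ hab
    obtain ⟨i, hmem⟩ := mem_proj.1 hab
    exact hS.1.1 _ hmem
  · rintro ⟨a, b⟩ hab ⟨a', b'⟩ hab' (rfl : a = a')
    obtain ⟨i, hi⟩ := exists_isFreeCopy hS.1 a
    have hbb' := hS.1.right_unique (hi.mem_of_mem_proj hS hab) (hi.mem_of_mem_proj hS hab')
    rw [Sum.inl_injective hbb']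
  · rintro ⟨a, b⟩ hab ⟨a', b'⟩ hab' (rfl : b = b')
    obtain ⟨i, hmem⟩ := mem_proj.1 hab
    obtain ⟨i', hmem'⟩ := mem_proj.1 hab'
    rw [(Prod.mk.inj (hS.1.left_unique hmem hmem')).1]

lemma IsFreeCopy.not_matchedA (hi : IsFreeCopy S a i) (ha : ¬ matchedA (proj S) a) :
    ¬ matchedA S (a, i) := by
  rintro ⟨b | d, hmem⟩
  · exact ha ⟨b, mem_proj.2 ⟨i, hmem⟩⟩
  · exact hi d hmem

lemma IsFreeCopy.wants_of_wants_proj (hS : IsStable (starSys I) S) (hi : IsFreeCopy S a i)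
    (ha : Wants (I.prefA a) (partnersA (proj S) a) b) :
    Wants ((starSys I).prefA (a, i)) (partnersA S (a, i)) (Sum.inl b) := by
  rcases ha with hun | ⟨b', hab', hpref⟩
  · exact Or.inl (hi.not_matchedA hun)
  · exact Or.inr ⟨Sum.inl b', hi.mem_of_mem_proj hS hab', hpref⟩

/-- A copy `a_i` that wants `b̃` bounds the level of `b` from below, since `b̃` ranks its neighbors
by subscript first. -/
lemma le_levelB (hS : IsStable (starSys I) S) (hE : I.E a b) (hab : (a, b) ∉ proj S)
    (ha : Wants ((starSys I).prefA (a, i)) (partnersA S (a, i)) (Sum.inl b)) :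
    (i : ℕ) ≤ levelB S b ∧
      (Wants (I.prefB b) (partnersB (proj S) b) a → (i : ℕ) < levelB S b) := by
  have hnot := hS.not_wants (show (starSys I).E (a, i) (Sum.inl b) from hE)
    (fun hmem => hab (mem_proj.2 ⟨i, hmem⟩)) ha
  obtain ⟨hne, hworse⟩ := not_or.1 hnot
  obtain ⟨⟨a', i'⟩, hmem⟩ := not_not.1 hne
  have hrank : ¬ ((i' : ℕ) < i ∨ (i : ℕ) = i' ∧ I.prefB b a a') :=
    fun h => hworse ⟨(a', i'), hmem, h⟩
  obtain ⟨hle, hpref⟩ := not_or.1 hrank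
  rw [levelB_eq hS.1 hmem]
  refine ⟨not_lt.1 hle, fun hb => (not_lt.1 hle).lt_of_ne fun heq => hpref ⟨heq, ?_⟩⟩
  have ha'b : (a', b) ∈ proj S := mem_proj.2 ⟨i', hmem⟩
  rcases hb with hun | ⟨a'', ha''b, hpref''⟩
  · exact absurd ⟨a', ha'b⟩ hun
  · rwa [(isMatching_proj hS).left_unique ha'b ha''b]

lemma wt_proj_le (hI : I.IsValid) (hS : IsStable (starSys I) S) (hE : I.E a b)
    (hab : (a, b) ∉ proj S) :
    wt I (proj S) a b ≤ 2 * ((levelB S b : ℤ) - levelA S a) := by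
  obtain ⟨i, hi, hia⟩ := exists_isFreeCopy_levelA hS.1 a
  have hsame (ha : Wants (I.prefA a) (partnersA (proj S) a) b) :=
    le_levelB hS hE hab (hi.wants_of_wants_proj hS ha)
  have hbelow : levelA S a ≤ levelB S b + 1 ∧
      (Wants (I.prefB b) (partnersB (proj S) b) a → levelA S a ≤ levelB S b) := by
    rcases Nat.eq_zero_or_pos (i : ℕ) with hzero | hpos
    · omega
    · let j : Fin (Fintype.card A) := ⟨i - 1, by omega⟩
      have hij : (j : ℕ) + 1 = i := Nat.sub_add_cancel hpos
      obtain ⟨k, hk, hmem⟩ := hi.isMatchedToNextDummy hS (Fin.lt_def.2 (by omega) : j < i)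
      have hj := le_levelB hS hE hab (Or.inr ⟨_, hmem, rfl, hk⟩)
      exact ⟨by omega, fun hb => by have := hj.2 hb; omega⟩
  rw [wt_of_notMem hI (isMatching_proj hS) hE hab]
  split_ifs with ha hb hb
  · have := (hsame ha).2 hb
    omega
  · have := (hsame ha).1
    omega
  · have := hbelow.2 hb
    omega
  · have := hbelow.1
    omega

lemma isLevelCertificate_proj (hI : I.IsValid) (hS : IsStable (starSys I) S) :
    IsLevelCertificate I (proj S) (Fintype.card A - 1) (levelA S) (levelB S) := by
  have hlevel (a : A) (b : B) (hab : (a, b) ∈ proj S) : levelA S a = levelB S b := by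
    obtain ⟨i, hi, hia⟩ := exists_isFreeCopy_levelA hS.1 a
    rw [← hia, levelB_eq hS.1 (hi.mem_of_mem_proj hS hab)]
  refine ⟨hlevel, fun a => ?_, fun a ha => ?_, fun b hb => ?_, fun a b hE => ?_⟩
  · obtain ⟨i, -, hia⟩ := exists_isFreeCopy_levelA hS.1 a
    omega
  · obtain ⟨i, hi, hia⟩ := exists_isFreeCopy_levelA hS.1 a
    exact hia ▸ hi.eq_last hS (hi.not_matchedA ha)
  · exact levelB_eq_zero hb
  · by_cases hab : (a, b) ∈ proj S
    · rw [wt_of_mem hI (isMatching_proj hS) hab, hlevel a b hab, sub_self, mul_zero]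
    · exact wt_proj_le hI hS hE hab

lemma isMaximumMatching_proj (hI : I.IsValid) (hS : IsStable (starSys I) S) :
    IsMaximumMatching I (proj S) := by
  refine ⟨isMatching_proj hS, fun N hN => ?_⟩
  rcases lt_or_ge (proj S).card (Fintype.card A) with hlt | hge
  · exact (isLevelCertificate_proj hI hS).card_le (Nat.le_sub_one_of_lt hlt) hN
  · exact hN.card_le.trans hge

end Level

/-- If `S` is a stable matching in `G*`, then `S'` is a popular
max-matching in `G`. -/
theorem stmt3 {A B : Type*} [Fintype A] [Fintype B] [DecidableEq A] [DecidableEq B]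
    (I : PrefSys A B) (hI : I.IsValid)
    (S : Finset (AStar A × BStar A B)) (hS : IsStable (starSys I) S) :
    IsPopularMaxMatching I (proj S) := by
  have hM := isMatching_proj hS
  refine ⟨isMaximumMatching_proj hI hS, fun N hN => ?_⟩
  exact (isLevelCertificate_proj hI hS).Delta_nonneg hI hM hN.1 (hN.2 _ hM)

end PopMax
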